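/- We have ∑_{n=0}^∞ 4^n / (binom(2n, n) · (2n+1)³) = −π³/32 − (π (log 2)²)/8 + 4 · Im(∑_{n=1}^∞ ((1+i)/2)^n / n³). -/

import Mathlib

open Real Complex

noncomputable def Li (k : ℕ) (z : ℂ) : ℂ := ∑' n : ℕ, z ^ (n + 1) / ((n : ℂ) + 1) ^ k

lemma ps_deriv {𝕜 : Type} [RCLike 𝕜] (c : ℕ → 𝕜) (m : ℕ) (hm : 1 ≤ m)
    (hc : ∀ n, ‖c n‖ ≤ 2 * n + 1) (z : 𝕜) (hz : ‖z‖ < 1) :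
    HasDerivAt (fun z => ∑' n : ℕ, c n / ((m : 𝕜) * n + 1) * z ^ (m * n + 1))
      (∑' n : ℕ, c n * z ^ (m * n)) z := by
  obtain ⟨r, hr1, hr2⟩ := exists_between hz
  have hr0 : 0 ≤ r := (norm_nonneg z).trans hr1.le
  have hu : Summable (fun n : ℕ => (2 * (n : ℝ) + 1) * r ^ n) := by
    have h1 := summable_pow_mul_geometric_of_norm_lt_one (R := ℝ) 1 (r := r)
      (by rwa [Real.norm_of_nonneg hr0])
    have h2 := summable_geometric_of_lt_one hr0 hr2
    refine ((h1.mul_left 2).add h2).congr fun n => ?_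
    simp only [pow_one]; ring
  refine hasDerivAt_tsum_of_isPreconnected (u := fun n : ℕ => (2 * (n : ℝ) + 1) * r ^ n)
    (g := fun n z => c n / ((m : 𝕜) * n + 1) * z ^ (m * n + 1))
    (g' := fun n z => c n * z ^ (m * n)) (t := Metric.ball 0 r) (y₀ := 0) hu
    Metric.isOpen_ball (convex_ball 0 r).isPreconnected ?_ ?_ ?_ ?_ ?_
  · intro n y _
    have h0 : ((m : 𝕜) * n + 1) ≠ 0 := by exact_mod_cast Nat.succ_ne_zero (m * n)
    have := (hasDerivAt_pow (m * n + 1) y).const_mul (c n / ((m : 𝕜) * n + 1))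
    refine this.congr_deriv ?_
    push_cast
    field_simp
  · intro n y hy
    rw [mem_ball_zero_iff] at hy
    rw [norm_mul, norm_pow]
    have : ‖y‖ ^ (m * n) ≤ r ^ n := by
      calc ‖y‖ ^ (m * n) ≤ ‖y‖ ^ n :=
            pow_le_pow_of_le_one (norm_nonneg _) (hy.le.trans hr2.le) (Nat.le_mul_of_pos_left n hm)
        _ ≤ r ^ n := by gcongr
    have := hc n
    gcongr
  · simpa using lt_of_le_of_lt (norm_nonneg z) hr1
  · simp
  · simpa using hr1

lemma Li_deriv (k : ℕ) (z : ℂ) (hz : ‖z‖ < 1) (hz0 : z ≠ 0) :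
    HasDerivAt (Li (k + 1)) (Li k z / z) z := by
  have h := ps_deriv (𝕜 := ℂ) (fun n => 1 / ((n : ℂ) + 1) ^ k) 1 le_rfl (fun n => by
    have : ‖(n : ℂ) + 1‖ = n + 1 := by
      have : ((n : ℂ) + 1) = ((n + 1 : ℕ) : ℂ) := by push_cast; rfl
      rw [this, Complex.norm_natCast]; push_cast; rfl
    rw [norm_div, norm_one, norm_pow, this]
    have h1 : (1 : ℝ) ≤ ((n : ℝ) + 1) ^ k := one_le_pow₀ (by linarith [n.cast_nonneg (α := ℝ)])
    have : 1 / ((n : ℝ) + 1) ^ k ≤ 1 := by rw [div_le_one (by linarith)]; exact h1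
    linarith [n.cast_nonneg (α := ℝ)]) z hz
  have e1 : Li (k + 1) = fun z : ℂ => ∑' n : ℕ,
      1 / ((n : ℂ) + 1) ^ k / (((1 : ℕ) : ℂ) * n + 1) * z ^ (1 * n + 1) := by
    funext y
    unfold Li
    refine tsum_congr fun n => ?_
    have h0 : ((n : ℂ) + 1) ≠ 0 := by exact_mod_cast Nat.succ_ne_zero n
    simp only [Nat.cast_one, one_mul]
    rw [pow_succ]
    field_simp
    ring
  have e2 : Li k z / z = ∑' n : ℕ, 1 / ((n : ℂ) + 1) ^ k * z ^ (1 * n) := by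
    unfold Li
    rw [← tsum_div_const]
    refine tsum_congr fun n => ?_
    simp only [one_mul]
    rw [pow_succ]
    field_simp
  rw [e1, e2]
  exact h

lemma Li_one (z : ℂ) (hz : ‖z‖ < 1) : Li 1 z = -Complex.log (1 - z) := by
  have h := Complex.hasSum_taylorSeries_neg_log hz
  rw [← h.tsum_eq, h.summable.tsum_eq_zero_add]
  simp [Li]

lemma Li_zero (k : ℕ) : Li k 0 = 0 := by simp [Li]

lemma Li_summable (k : ℕ) (z : ℂ) (hz : ‖z‖ ≤ 1) :
    Summable (fun n : ℕ => z ^ (n + 1) / ((n : ℂ) + 1) ^ (k + 2)) ∧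
    ∀ n : ℕ, ‖z ^ (n + 1) / ((n : ℂ) + 1) ^ (k + 2)‖ ≤ 1 / ((n : ℝ) + 1) ^ 2 := by
  have hb : ∀ n : ℕ, ‖z ^ (n + 1) / ((n : ℂ) + 1) ^ (k + 2)‖ ≤ 1 / ((n : ℝ) + 1) ^ 2 := by
    intro n
    have : ‖(n : ℂ) + 1‖ = n + 1 := by
      have : ((n : ℂ) + 1) = ((n + 1 : ℕ) : ℂ) := by push_cast; rfl
      rw [this, Complex.norm_natCast]; push_cast; rfl
    rw [norm_div, norm_pow, norm_pow, this]
    have h1 : (1 : ℝ) ≤ ((n : ℝ) + 1) := by linarith [n.cast_nonneg (α := ℝ)]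
    have h2 := pow_le_one₀ (n := n + 1) (norm_nonneg z) hz
    have h3 : ((n : ℝ) + 1) ^ 2 ≤ ((n : ℝ) + 1) ^ (k + 2) :=
      pow_le_pow_right₀ h1 (by omega)
    gcongr
  refine ⟨Summable.of_norm_bounded ?_ hb, hb⟩
  have := (summable_nat_add_iff 1).2 (Real.summable_one_div_nat_pow.2 (one_lt_two))
  simpa using this

lemma Li_cont (k : ℕ) : ContinuousOn (Li (k + 2)) (Metric.closedBall 0 1) := by
  unfold Li
  refine continuousOn_tsum (u := fun n : ℕ => 1 / ((n : ℝ) + 1) ^ 2) ?_ ?_ ?_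
  · intro n; fun_prop
  · have := (summable_nat_add_iff 1).2 (Real.summable_one_div_nat_pow.2 (one_lt_two))
    simpa using this
  · intro n z hz
    exact (Li_summable k z (by simpa using hz)).2 n

lemma const_of {E : Type} [NormedAddCommGroup E] [NormedSpace ℝ E] [CompleteSpace E]
    (f : ℝ → E) (b : ℝ) (hb : 0 ≤ b)
    (hc : ContinuousOn f (Set.Icc 0 b)) (hd : ∀ t ∈ Set.Ioo 0 b, HasDerivAt f 0 t) :
    f b = f 0 := by
  have := intervalIntegral.integral_eq_sub_of_hasDerivAt_of_le hb hc hd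
    (by simp)
  simp at this
  exact (sub_eq_zero.1 this.symm)

lemma Li_conj (k : ℕ) (z : ℂ) : Li k (starRingEnd ℂ z) = starRingEnd ℂ (Li k z) := by
  unfold Li
  rw [Complex.conj_tsum]
  refine tsum_congr fun n => ?_
  simp

lemma Li_two_one : Li 2 1 = (π : ℂ) ^ 2 / 6 := by
  have h := hasSum_zeta_two
  have h2 := h.tsum_eq
  rw [h.summable.tsum_eq_zero_add] at h2
  have h3 : ((∑' b : ℕ, 1 / ((b + 1 : ℕ) : ℝ) ^ 2 : ℝ) : ℂ) = (π : ℂ) ^ 2 / 6 := by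
    have : (∑' b : ℕ, 1 / ((b + 1 : ℕ) : ℝ) ^ 2 : ℝ) = π ^ 2 / 6 := by simpa using h2
    rw [this]; push_cast; rfl
  rw [Complex.ofReal_tsum] at h3
  rw [← h3]
  unfold Li
  refine tsum_congr fun n => ?_
  push_cast
  rw [one_pow]

lemma Li_one_im (k : ℕ) : (Li k 1).im = 0 := by
  have := Li_conj k 1
  rw [map_one] at this
  exact Complex.conj_eq_iff_im.1 this.symm

lemma Li_three_I : (Li 3 (-Complex.I)).im = -(π ^ 3 / 32) := by
  have h := hasSum_one_div_nat_pow_mul_sin (k := 1) one_ne_zero (x := 1 / 4) (by norm_num)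
  have hs := (Li_summable 1 (-Complex.I) (by simp)).1
  have h1 : (Li 3 (-Complex.I)).im = ∑' n : ℕ, ((-Complex.I) ^ (n + 1) / ((n : ℂ) + 1) ^ 3).im := by
    unfold Li; rw [Complex.im_tsum]; exact hs
  have h2 := h.tsum_eq
  rw [h.summable.tsum_eq_zero_add] at h2
  have h3 : ∀ n : ℕ, ((-Complex.I) ^ (n + 1) / ((n : ℂ) + 1) ^ 3).im =
      -(1 / ((n + 1 : ℕ) : ℝ) ^ (2 * 1 + 1) * Real.sin (2 * π * ((n + 1 : ℕ) : ℝ) * (1 / 4))) := by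
    intro n
    have e1 : -Complex.I = Complex.exp (((-(π / 2) : ℝ) : ℂ) * Complex.I) := by
      push_cast
      rw [← Complex.exp_neg_pi_div_two_mul_I]
      congr 1
      ring
    have e2 : (-Complex.I) ^ (n + 1) / ((n : ℂ) + 1) ^ 3 =
       ((1 / ((n + 1 : ℕ) : ℝ) ^ 3 : ℝ) : ℂ) *
        Complex.exp (((-(2 * π * ((n + 1 : ℕ) : ℝ) * (1 / 4)) : ℝ) : ℂ) * Complex.I) := by
      rw [e1, ← Complex.exp_nat_mul]
      push_cast
      rw [div_eq_mul_inv, mul_comm, one_div]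
      congr 2
      ring
    rw [e2, Complex.im_ofReal_mul, Complex.exp_ofReal_mul_I_im, Real.sin_neg]
    norm_num
  rw [h1, tsum_congr h3, tsum_neg]
  have h4 : (1 / 4 : ℝ) = (algebraMap ℚ ℝ) (1 / 4 : ℚ) := by simp
  have h5 : Polynomial.eval (1 / 4 : ℝ) (Polynomial.map (algebraMap ℚ ℝ)
      (Polynomial.bernoulli (2 * 1 + 1))) = 3 / 64 := by
    rw [h4, Polynomial.eval_map, Polynomial.eval₂_at_apply, (by decide : 2 * 1 + 1 = 3),
      Polynomial.bernoulli_three_eval_one_quarter]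
    norm_num
  rw [h5] at h2
  have h6 : 1 / ((0 : ℕ) : ℝ) ^ (2 * 1 + 1) * Real.sin (2 * π * ((0 : ℕ) : ℝ) * (1 / 4)) = 0 := by
    simp
  rw [h6, zero_add] at h2
  rw [h2]
  norm_num [Nat.factorial]
  ring

noncomputable def L (t : ℝ) : ℂ := Complex.log (1 + t * Complex.I)
noncomputable def vv (t : ℝ) : ℂ := (1 + t * Complex.I)⁻¹
noncomputable def ww (t : ℝ) : ℂ := 1 - vv t
noncomputable def MM (t : ℝ) : ℂ := -Li 2 (-(t * Complex.I))
noncomputable def NN (t : ℝ) : ℂ := -Li 3 (-(t * Complex.I))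

lemma u_ne (t : ℝ) : (1 + t * Complex.I : ℂ) ≠ 0 := by
  intro h
  have := congrArg Complex.re h
  simp at this

lemma u_slit (t : ℝ) : (1 + t * Complex.I : ℂ) ∈ Complex.slitPlane := by
  left; simp

lemma u_deriv (t : ℝ) : HasDerivAt (fun t : ℝ => (1 + t * Complex.I : ℂ)) Complex.I t := by
  have h : HasDerivAt (fun t : ℝ => (t : ℂ)) 1 t := Complex.ofRealCLM.hasDerivAt
  simpa using (h.mul_const Complex.I).const_add 1

lemma L_deriv (t : ℝ) : HasDerivAt L (Complex.I / (1 + t * Complex.I)) t :=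
  (u_deriv t).clog_real (u_slit t)

lemma v_deriv (t : ℝ) : HasDerivAt vv (-Complex.I / (1 + t * Complex.I) ^ 2) t :=
  (u_deriv t).fun_inv (u_ne t)

lemma w_deriv (t : ℝ) : HasDerivAt ww (Complex.I / (1 + t * Complex.I) ^ 2) t := by
  refine ((v_deriv t).const_sub 1).congr_deriv ?_
  ring

lemma w_eq (t : ℝ) : ww t = t * Complex.I / (1 + t * Complex.I) := by
  have := u_ne t
  unfold ww vv
  field_simp
  ring

lemma norm_u (t : ℝ) : ‖(1 + t * Complex.I : ℂ)‖ ^ 2 = 1 + t ^ 2 := by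
  rw [Complex.sq_norm, Complex.normSq_apply]
  simp
  ring

lemma norm_v_le (t : ℝ) : ‖vv t‖ ≤ 1 := by
  unfold vv
  rw [norm_inv]
  have := norm_u t
  refine inv_le_one_of_one_le₀ ?_
  nlinarith [sq_nonneg t, norm_nonneg (1 + t * Complex.I : ℂ)]

lemma norm_v (t : ℝ) (ht : 0 < t) : ‖vv t‖ < 1 := by
  unfold vv
  rw [norm_inv]
  have := norm_u t
  refine inv_lt_one_of_one_lt₀ ?_
  nlinarith [sq_pos_of_pos ht, norm_nonneg (1 + t * Complex.I : ℂ)]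

lemma norm_w (t : ℝ) : ‖ww t‖ < 1 := by
  rw [w_eq, norm_div]
  have := norm_u t
  have h0 : 0 < ‖(1 + t * Complex.I : ℂ)‖ := norm_pos_iff.2 (u_ne t)
  rw [div_lt_one h0]
  simp only [norm_mul, Complex.norm_real, Complex.norm_I, mul_one, Real.norm_eq_abs]
  exact abs_lt_of_sq_lt_sq (by nlinarith) h0.le

lemma v_ne (t : ℝ) : vv t ≠ 0 := inv_ne_zero (u_ne t)

lemma w_ne (t : ℝ) (ht : 0 < t) : ww t ≠ 0 := by
  rw [w_eq]
  have := ht.ne'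
  exact div_ne_zero (by simp [this]) (u_ne t)

lemma L_im_lt (t : ℝ) : |(L t).im| < π / 2 := by
  unfold L
  rw [Complex.log_im, Complex.abs_arg_lt_pi_div_two_iff]
  left; simp

lemma log_v (t : ℝ) : Complex.log (1 - ww t) = -L t := by
  unfold ww vv L
  rw [sub_sub_cancel, Complex.log_inv]
  have := L_im_lt t
  unfold L at this
  rw [Complex.log_im] at this
  intro h
  rw [h, abs_of_pos Real.pi_pos] at this
  linarith [Real.pi_pos]

lemma log_w (t : ℝ) (ht : 0 < t) :
    Complex.log (1 - vv t) = Real.log t + π / 2 * Complex.I - L t := by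
  have e : 1 - vv t = Complex.exp (Real.log t + π / 2 * Complex.I - L t) := by
    rw [Complex.exp_sub, Complex.exp_add, Complex.exp_pi_div_two_mul_I, ← Complex.ofReal_exp,
      Real.exp_log ht]
    unfold L
    rw [Complex.exp_log (u_ne t)]
    exact w_eq t
  have := abs_lt.1 (L_im_lt t)
  have e2 : (Real.log t + π / 2 * Complex.I - L t : ℂ).im = π / 2 - (L t).im := by
    rw [show (π / 2 : ℂ) = ((π / 2 : ℝ) : ℂ) by push_cast; rfl]
    rw [Complex.sub_im, Complex.add_im, Complex.im_ofReal_mul]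
    simp
  rw [e, Complex.log_exp] <;> rw [e2] <;> linarith [Real.pi_pos]

lemma Li2w_deriv (t : ℝ) (ht : 0 < t) : HasDerivAt (fun t => Li 2 (ww t))
    (L t / (t * (1 + t * Complex.I))) t := by
  have h := (Li_deriv 1 (ww t) (norm_w t) (w_ne t ht)).comp t (w_deriv t)
  refine h.congr_deriv ?_
  rw [Li_one _ (norm_w t), log_v, w_eq]
  have h1 := u_ne t
  have h2 : (t : ℂ) ≠ 0 := by exact_mod_cast ht.ne'
  have h3 := Complex.I_ne_zero
  field_simp

lemma Li2v_deriv (t : ℝ) (ht : 0 < t) : HasDerivAt (fun t => Li 2 (vv t))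
    ((Real.log t + π / 2 * Complex.I - L t) * Complex.I / (1 + t * Complex.I)) t := by
  have h := (Li_deriv 1 (vv t) (norm_v t ht) (v_ne t)).comp t (v_deriv t)
  refine h.congr_deriv ?_
  rw [Li_one _ (norm_v t ht), log_w t ht]
  unfold vv
  have h1 := u_ne t
  field_simp

lemma Li3v_deriv (t : ℝ) (ht : 0 < t) : HasDerivAt (fun t => Li 3 (vv t))
    (-(Li 2 (vv t) * Complex.I / (1 + t * Complex.I))) t := by
  have h := (Li_deriv 2 (vv t) (norm_v t ht) (v_ne t)).comp t (v_deriv t)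
  refine h.congr_deriv ?_
  have h1 := u_ne t
  rw [show Li 2 (vv t) / vv t = Li 2 (vv t) * (1 + t * Complex.I) by simp [vv]]
  field_simp

lemma nI_deriv (t : ℝ) : HasDerivAt (fun t : ℝ => (-(t * Complex.I) : ℂ)) (-Complex.I) t := by
  have h : HasDerivAt (fun t : ℝ => (t : ℂ)) 1 t := Complex.ofRealCLM.hasDerivAt
  simpa using (h.mul_const Complex.I).fun_neg

lemma M_deriv (t : ℝ) (ht : 0 < t) (ht1 : t < 1) : HasDerivAt MM (L t / t) t := by
  have h2 : (t : ℂ) ≠ 0 := by exact_mod_cast ht.ne'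
  have hn : ‖(-(t * Complex.I) : ℂ)‖ < 1 := by simp [abs_of_pos ht, ht1]
  have h := ((Li_deriv 1 (-(t * Complex.I)) hn (by simp [ht.ne'])).comp t (nI_deriv t)).neg
  refine h.congr_deriv ?_
  rw [Li_one _ hn, sub_neg_eq_add]
  have h3 := Complex.I_ne_zero
  unfold L
  field_simp

lemma N_deriv (t : ℝ) (ht : 0 < t) (ht1 : t < 1) : HasDerivAt NN (MM t / t) t := by
  have h2 : (t : ℂ) ≠ 0 := by exact_mod_cast ht.ne'
  have hn : ‖(-(t * Complex.I) : ℂ)‖ < 1 := by simp [abs_of_pos ht, ht1]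
  have h := ((Li_deriv 2 (-(t * Complex.I)) hn (by simp [ht.ne'])).comp t (nI_deriv t)).neg
  refine h.congr_deriv ?_
  have h3 := Complex.I_ne_zero
  unfold MM
  field_simp

lemma L_cont : Continuous L := continuous_iff_continuousAt.2 fun t => (L_deriv t).continuousAt
lemma v_cont : Continuous vv := continuous_iff_continuousAt.2 fun t => (v_deriv t).continuousAt
lemma w_cont : Continuous ww := continuous_iff_continuousAt.2 fun t => (w_deriv t).continuousAt

lemma Liv_cont (k : ℕ) : Continuous (fun t => Li (k + 2) (vv t)) :=
  (Li_cont k).comp_continuous v_cont fun t => by simpa using norm_v_le t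
lemma Liw_cont (k : ℕ) : Continuous (fun t => Li (k + 2) (ww t)) :=
  (Li_cont k).comp_continuous w_cont fun t => by simpa using (norm_w t).le
lemma nI_cont (k : ℕ) : ContinuousOn (fun t : ℝ => -Li (k + 2) (-(t * Complex.I))) (Set.Icc 0 1) :=
  ((Li_cont k).comp (f := fun t : ℝ => (-(t * Complex.I) : ℂ)) (by fun_prop) fun t ht => by
    simpa using abs_le.2 ⟨by linarith [ht.1], ht.2⟩).neg
lemma M_cont : ContinuousOn MM (Set.Icc 0 1) := nI_cont 0
lemma N_cont : ContinuousOn NN (Set.Icc 0 1) := nI_cont 1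

lemma L_zero : L 0 = 0 := by simp [L]

lemma q_cont : Continuous (fun t : ℝ => (Real.log t : ℂ) * L t) := by
  rw [continuous_iff_continuousAt]
  intro t
  by_cases ht : t = 0
  · subst ht
    unfold ContinuousAt
    simp only [L_zero, mul_zero]
    have hx : Filter.Tendsto (fun t : ℝ => 3 / 2 * ‖t * Real.log t‖) (nhds 0) (nhds 0) := by
      have := (Real.continuous_mul_log.norm.const_mul (3 / 2)).tendsto 0
      simpa using this
    refine squeeze_zero_norm' ?_ hx
    filter_upwards [Metric.ball_mem_nhds (0 : ℝ) (by norm_num : (0 : ℝ) < 1 / 2)] with t ht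
    rw [mem_ball_zero_iff] at ht
    have h := Complex.norm_log_one_add_half_le_self (z := t * Complex.I) (by simpa using ht.le)
    rw [norm_mul, norm_mul]
    simp only [norm_mul, Complex.norm_real, Complex.norm_I, mul_one] at h ⊢
    unfold L
    nlinarith [norm_nonneg (Real.log t)]
  · have : ContinuousAt (fun t : ℝ => (Real.log t : ℂ)) t :=
      Complex.continuous_ofReal.continuousAt.comp (Real.continuousAt_log ht)
    exact this.mul L_cont.continuousAt

lemma log_deriv (t : ℝ) (ht : 0 < t) : HasDerivAt (fun t : ℝ => (Real.log t : ℂ)) (1 / t) t := by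
  have := (Real.hasDerivAt_log ht.ne').ofReal_comp
  simpa using this

lemma v_zero : vv 0 = 1 := by simp [vv]
lemma w_zero : ww 0 = 0 := by simp [ww, vv]

lemma landen (t : ℝ) (ht : t ∈ Set.Icc (0 : ℝ) 1) : MM t = Li 2 (ww t) + L t ^ 2 / 2 := by
  have h := const_of (fun t => MM t - Li 2 (ww t) - L t ^ 2 / 2) t ht.1
    (((M_cont.mono (Set.Icc_subset_Icc_right ht.2)).sub (Liw_cont 0).continuousOn).sub
      ((L_cont.pow 2).div_const 2).continuousOn) ?_
  · simp only [w_zero, L_zero, Li_zero, MM] at h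
    simp [Li_zero] at h
    unfold MM
    linear_combination h
  · intro s hs
    have hs1 := lt_of_lt_of_le hs.2 ht.2
    refine (((M_deriv s hs.1 hs1).sub (Li2w_deriv s hs.1)).sub
      (((L_deriv s).pow 2).div_const 2)).congr_deriv ?_
    have h1 := u_ne s
    have h2 : (s : ℂ) ≠ 0 := by exact_mod_cast hs.1.ne'
    simp only [Nat.cast_ofNat, Nat.add_one_sub_one, pow_one]
    field_simp
    ring

lemma reflect : Li 2 (vv 1) + Li 2 (ww 1) = π ^ 2 / 6 + L 1 * (π / 2 * Complex.I - L 1) := by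
  have h := const_of (fun t => Li 2 (vv t) + Li 2 (ww t) - ((Real.log t : ℂ) * L t +
      (π / 2 * Complex.I * L t - L t ^ 2))) 1 zero_le_one
    (Continuous.continuousOn (((Liv_cont 0).add (Liw_cont 0)).sub
      (q_cont.add ((L_cont.const_mul _).sub (L_cont.pow 2))))) ?_
  · simp only [w_zero, L_zero, Li_zero, v_zero, Li_two_one] at h
    simp at h
    linear_combination h
  · intro s hs
    refine (((Li2v_deriv s hs.1).add (Li2w_deriv s hs.1)).sub
      (((log_deriv s hs.1).mul (L_deriv s)).add
      (((L_deriv s).const_mul _).sub ((L_deriv s).pow 2)))).congr_deriv ?_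
    have h1 := u_ne s
    have h2 : (s : ℂ) ≠ 0 := by exact_mod_cast hs.1.ne'
    simp only [Nat.cast_ofNat, Nat.add_one_sub_one, pow_one]
    have key : Complex.I * s * (1 + Complex.I * s)⁻¹ + (1 + Complex.I * s)⁻¹ - 1 = 0 := by
      rw [mul_comm Complex.I]
      field_simp
      ring
    field_simp
    ring_nf
    linear_combination 2 * L s * key

noncomputable def JJ (t : ℝ) : ℂ := (Real.log t * L t) * L t + π / 2 * Complex.I * L t ^ 2
  - 2 / 3 * L t ^ 3 - 2 * (L t * Li 2 (vv t)) - 2 * Li 3 (vv t)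

lemma J_cont : Continuous JJ :=
  ((((q_cont.mul L_cont).add ((L_cont.pow 2).const_mul _)).sub ((L_cont.pow 3).const_mul _)).sub
    ((L_cont.mul (Liv_cont 0)).const_mul _)).sub ((Liv_cont 1).const_mul _)

lemma J_deriv (s : ℝ) (hs : 0 < s) : HasDerivAt JJ (L s ^ 2 / s) s := by
  have h1 := u_ne s
  have h2 : (s : ℂ) ≠ 0 := by exact_mod_cast hs.ne'
  have hL := L_deriv s
  refine ((((((log_deriv s hs).mul hL).mul hL).add ((hL.pow 2).const_mul _)).sub
    ((hL.pow 3).const_mul _)).sub ((hL.mul (Li2v_deriv s hs)).const_mul _)).sub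
     ((Li3v_deriv s hs).const_mul _) |>.congr_deriv ?_
  simp only [Nat.cast_ofNat, Nat.add_one_sub_one, pow_one, Pi.mul_apply]
  field_simp
  ring

lemma im_deriv {f : ℝ → ℂ} {f' : ℂ} {t : ℝ} (h : HasDerivAt f f' t) :
    HasDerivAt (fun t => (f t).im) f'.im t :=
  Complex.imCLM.hasFDerivAt.comp_hasDerivAt t h

lemma re_deriv {f : ℝ → ℂ} {f' : ℂ} {t : ℝ} (h : HasDerivAt f f' t) :
    HasDerivAt (fun t => (f t).re) f'.re t :=
  Complex.reCLM.hasFDerivAt.comp_hasDerivAt t h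

lemma u_inv (t : ℝ) : Complex.I / (1 + t * Complex.I) =
    ((t / (1 + t ^ 2) : ℝ) : ℂ) + ((1 / (1 + t ^ 2) : ℝ) : ℂ) * Complex.I := by
  have h0 : (1 + (t : ℂ) ^ 2) ≠ 0 := by
    have : (1 + t ^ 2 : ℝ) ≠ 0 := by positivity
    exact_mod_cast this
  rw [div_eq_iff (u_ne t)]
  push_cast
  field_simp
  linear_combination (-(t : ℂ)) * Complex.I_sq

lemma L_im_deriv (t : ℝ) : HasDerivAt (fun t => (L t).im) (1 / (1 + t ^ 2)) t := by
  have := im_deriv (L_deriv t)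
  rw [u_inv, Complex.add_im, Complex.im_ofReal_mul, Complex.ofReal_im] at this
  simpa using this

lemma L_re_deriv (t : ℝ) : HasDerivAt (fun t => (L t).re) (t / (1 + t ^ 2)) t := by
  have := re_deriv (L_deriv t)
  rw [u_inv, Complex.add_re, Complex.re_ofReal_mul, Complex.ofReal_re] at this
  simpa using this

noncomputable def aa (n : ℕ) : ℝ := 4 ^ n / (Nat.choose (2 * n) n : ℝ)

lemma aa_zero : aa 0 = 1 := by simp [aa]

lemma aa_succ (n : ℕ) : aa (n + 1) - aa n = aa n / (2 * n + 1) := by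
  have h := Nat.succ_mul_centralBinom_succ n
  have h' : ((n : ℝ) + 1) * ((n + 1).centralBinom : ℝ) = 2 * (2 * n + 1) * (n.centralBinom : ℝ) := by
    exact_mod_cast h
  have p0 : (0 : ℝ) < n.centralBinom := by exact_mod_cast n.centralBinom_pos
  have p1 : (0 : ℝ) < (n + 1).centralBinom := by exact_mod_cast (n + 1).centralBinom_pos
  have e0 : aa n = 4 ^ n / (n.centralBinom : ℝ) := rfl
  have e1 : aa (n + 1) = 4 ^ (n + 1) / ((n + 1).centralBinom : ℝ) := rfl
  have hn : (2 * (n : ℝ) + 1) ≠ 0 := by positivity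
  rw [e0, e1]
  field_simp
  linear_combination (-2 * 4 ^ n : ℝ) * h'

lemma aa_nonneg (n : ℕ) : 0 ≤ aa n := by unfold aa; positivity

lemma aa_le (n : ℕ) : aa n ≤ 2 * n + 1 := by
  rcases Nat.eq_zero_or_pos n with rfl | hn
  · simp [aa]
  have h := Nat.four_pow_le_two_mul_self_mul_centralBinom n hn
  have h' : (4 : ℝ) ^ n ≤ 2 * n * (n.centralBinom : ℝ) := by exact_mod_cast h
  have p0 : (0 : ℝ) < n.centralBinom := by exact_mod_cast n.centralBinom_pos
  have e0 : aa n = 4 ^ n / (n.centralBinom : ℝ) := rfl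
  rw [e0, div_le_iff₀ p0]
  nlinarith

noncomputable def FF (k : ℕ) (x : ℝ) : ℝ := ∑' n : ℕ, aa n / (2 * n + 1) ^ k * x ^ (2 * n + 1)

lemma FF_deriv0 (k : ℕ) (x : ℝ) (hx : |x| < 1) :
    HasDerivAt (FF (k + 1)) (∑' n : ℕ, aa n / (2 * n + 1) ^ k * x ^ (2 * n)) x := by
  have h := ps_deriv (𝕜 := ℝ) (fun n => aa n / (2 * n + 1) ^ k) 2 one_le_two (fun n => by
    rw [Real.norm_of_nonneg (div_nonneg (aa_nonneg n) (by positivity))]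
    refine (div_le_self (aa_nonneg n) (one_le_pow₀ ?_)).trans (aa_le n)
    linarith [n.cast_nonneg (α := ℝ)]) x hx
  have e1 : FF (k + 1) = fun x : ℝ => ∑' n : ℕ,
      aa n / (2 * n + 1) ^ k / (((2 : ℕ) : ℝ) * n + 1) * x ^ (2 * n + 1) := by
    funext y
    unfold FF
    refine tsum_congr fun n => ?_
    push_cast
    rw [div_div, pow_succ]
  rw [e1]
  exact h

lemma FF_deriv (k : ℕ) (x : ℝ) (hx : |x| < 1) (h0 : x ≠ 0) :
    HasDerivAt (FF (k + 1)) (FF k x / x) x := by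
  refine (FF_deriv0 k x hx).congr_deriv ?_
  unfold FF
  rw [← tsum_div_const]
  refine tsum_congr fun n => ?_
  rw [pow_succ]
  field_simp

lemma FF_zero (k : ℕ) : FF k 0 = 0 := by simp [FF]

lemma FF3_cont : ContinuousOn (FF 3) (Set.Icc (-1) 1) := by
  unfold FF
  refine continuousOn_tsum (u := fun n : ℕ => 1 / ((n : ℝ) + 1) ^ 2) ?_ ?_ ?_
  · intro n; fun_prop
  · have := (summable_nat_add_iff 1).2 (Real.summable_one_div_nat_pow.2 (one_lt_two))
    simpa using this
  · intro n x hx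
    rw [norm_mul, norm_pow, Real.norm_of_nonneg (div_nonneg (aa_nonneg n) (by positivity))]
    have h2 := pow_le_one₀ (n := 2 * n + 1) (norm_nonneg x) (abs_le.2 hx)
    have h3 : aa n / (2 * n + 1) ^ 3 ≤ 1 / ((n : ℝ) + 1) ^ 2 := by
      have hn := n.cast_nonneg (α := ℝ)
      calc aa n / (2 * n + 1) ^ 3 ≤ (2 * n + 1) / (2 * n + 1) ^ 3 := by
            have := aa_le n; gcongr
        _ = 1 / (2 * (n : ℝ) + 1) ^ 2 := by field_simp
        _ ≤ _ := by gcongr; linarith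
    calc _ ≤ aa n / (2 * n + 1) ^ 3 * 1 :=
          mul_le_mul_of_nonneg_left h2 (div_nonneg (aa_nonneg n) (by positivity))
      _ ≤ _ := by rw [mul_one]; exact h3

lemma FF_ode (x : ℝ) (hx : |x| < 1) :
    (1 - x ^ 2) * (∑' n : ℕ, aa n / (2 * n + 1) ^ 0 * x ^ (2 * n)) = 1 + x * FF 1 x := by
  have hs : Summable (fun n : ℕ => aa n * x ^ (2 * n)) := by
    have h1 := summable_pow_mul_geometric_of_norm_lt_one (R := ℝ) 1 (r := |x|)
      (by simpa using hx)
    have h2 := summable_geometric_of_lt_one (abs_nonneg x) hx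
    refine Summable.of_norm_bounded ((h1.mul_left 2).add h2) fun n => ?_
    rw [norm_mul, norm_pow, Real.norm_of_nonneg (aa_nonneg n), Real.norm_eq_abs]
    have h3 : |x| ^ (2 * n) ≤ |x| ^ n :=
      pow_le_pow_of_le_one (abs_nonneg x) hx.le (by omega)
    calc aa n * |x| ^ (2 * n) ≤ (2 * n + 1) * |x| ^ n := by
          have := aa_le n; gcongr
      _ = _ := by simp only [pow_one]; ring
  simp only [pow_zero, div_one]
  have e : x * FF 1 x = ∑' n : ℕ, (aa (n + 1) * x ^ (2 * (n + 1)) - x ^ 2 * (aa n * x ^ (2 * n))) := by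
    unfold FF
    rw [← tsum_mul_left]
    refine tsum_congr fun n => ?_
    rw [pow_one, ← aa_succ]
    ring
  rw [e, Summable.tsum_sub ((summable_nat_add_iff 1).2 hs) (hs.mul_left _), tsum_mul_left]
  have h0 := hs.tsum_eq_zero_add
  simp only [mul_zero, pow_zero, mul_one, aa_zero] at h0
  linear_combination h0

noncomputable def xx (t : ℝ) : ℝ := 2 * t / (1 + t ^ 2)

lemma xx_deriv (t : ℝ) : HasDerivAt xx (2 * (1 - t ^ 2) / (1 + t ^ 2) ^ 2) t := by
  have h1 : HasDerivAt (fun t : ℝ => 2 * t) 2 t := by simpa using (hasDerivAt_id t).const_mul 2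
  have h2 : HasDerivAt (fun t : ℝ => 1 + t ^ 2) (2 * t) t := by
    simpa using (hasDerivAt_pow 2 t).const_add 1
  refine (h1.div h2 (by positivity)).congr_deriv ?_
  congr 1
  ring

lemma xx_cont : Continuous xx := continuous_iff_continuousAt.2 fun t => (xx_deriv t).continuousAt

lemma xx_lt (t : ℝ) (h0 : 0 ≤ t) (h1 : t < 1) : |xx t| < 1 := by
  unfold xx
  rw [abs_of_nonneg (by positivity), div_lt_one (by positivity)]
  nlinarith [sq_pos_of_pos (sub_pos.2 h1)]

lemma xx_le (t : ℝ) : |xx t| ≤ 1 := by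
  unfold xx
  rw [abs_le, le_div_iff₀ (by positivity), div_le_one (by positivity)]
  constructor <;> nlinarith [sq_nonneg (1 - t), sq_nonneg (1 + t)]

lemma xx_zero : xx 0 = 0 := by simp [xx]
lemma xx_one : xx 1 = 1 := by norm_num [xx]

lemma F1_eq (t : ℝ) (h0 : 0 ≤ t) (h1 : t < 1) :
    (1 - t ^ 2) / (1 + t ^ 2) * FF 1 (xx t) = 2 * (L t).im := by
  have hd : ∀ s : ℝ, 0 ≤ s → s < 1 →
      HasDerivAt (fun t => (1 - t ^ 2) / (1 + t ^ 2) * FF 1 (xx t) - 2 * (L t).im) 0 s := by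
    intro s hs0 hs1
    have hx := xx_lt s hs0 hs1
    have g1 : HasDerivAt (fun t : ℝ => 1 - t ^ 2) (-(2 * s)) s := by
      simpa using (hasDerivAt_pow 2 s).const_sub 1
    have g2 : HasDerivAt (fun t : ℝ => 1 + t ^ 2) (2 * s) s := by
      simpa using (hasDerivAt_pow 2 s).const_add 1
    have g3 := (FF_deriv0 0 (xx s) hx).comp s (xx_deriv s)
    have hp : (1 + s ^ 2) ≠ 0 := by positivity
    refine (((g1.div g2 hp).mul g3).sub ((L_im_deriv s).const_mul 2)).congr_deriv ?_
    have ode := FF_ode (xx s) hx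
    have e : 1 - xx s ^ 2 = ((1 - s ^ 2) / (1 + s ^ 2)) ^ 2 := by
      unfold xx; field_simp; ring
    rw [e] at ode
    simp only [Function.comp, zero_add]
    generalize (∑' n : ℕ, aa n / (2 * n + 1) ^ 0 * xx s ^ (2 * n)) = D at *
    have e2 : xx s = 2 * s / (1 + s ^ 2) := rfl
    generalize FF 1 (xx s) = F at *
    rw [e2] at ode
    have : (1 - s ^ 2) / (1 + s ^ 2) * (D * (2 * (1 - s ^ 2) / (1 + s ^ 2) ^ 2)) =
      2 / (1 + s ^ 2) * (1 + 2 * s / (1 + s ^ 2) * F) := by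
      rw [← ode]; field_simp
    simp only [Pi.div_apply]
    rw [this]
    field_simp
    ring
  have h := const_of (fun t => (1 - t ^ 2) / (1 + t ^ 2) * FF 1 (xx t) - 2 * (L t).im) t h0
    (fun s hs => (hd s hs.1 (lt_of_le_of_lt hs.2 h1)).continuousAt.continuousWithinAt)
    (fun s hs => hd s hs.1.le (hs.2.trans h1))
  simp only [L_zero, xx_zero, FF_zero, Complex.zero_im] at h
  linarith

lemma im_cont {f : ℝ → ℂ} {s : Set ℝ} (h : ContinuousOn f s) :
    ContinuousOn (fun t => (f t).im) s := Complex.continuous_im.comp_continuousOn h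

lemma F_step (k : ℕ) (s : ℝ) (h0 : 0 < s) (h1 : s < 1) :
    HasDerivAt (fun t => FF (k + 1) (xx t)) (FF k (xx s) * ((1 - s ^ 2) / (s * (1 + s ^ 2)))) s := by
  have hx0 : xx s ≠ 0 := by unfold xx; positivity
  refine ((FF_deriv k (xx s) (xx_lt s h0.le h1) hx0).comp s (xx_deriv s)).congr_deriv ?_
  rw [div_mul_eq_mul_div, mul_div_assoc]
  congr 1
  unfold xx
  field_simp

lemma F2_eq (t : ℝ) (h0 : 0 ≤ t) (h1 : t < 1) : FF 2 (xx t) = 2 * (MM t).im := by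
  have h := const_of (fun t => FF 2 (xx t) - 2 * (MM t).im) t h0 (ContinuousOn.sub
    (fun s hs => ((FF_deriv0 1 (xx s) (xx_lt s hs.1 (lt_of_le_of_lt hs.2 h1))).comp s
      (xx_deriv s)).continuousAt.continuousWithinAt)
    ((im_cont (M_cont.mono (Set.Icc_subset_Icc_right h1.le))).const_mul 2)) ?_
  · simp only [xx_zero, FF_zero] at h
    have : MM 0 = 0 := by simp [MM, Li_zero]
    rw [this] at h
    simp at h
    linarith
  · intro s hs
    have hs1 := hs.2.trans h1
    refine ((F_step 1 s hs.1 hs1).sub ((im_deriv (M_deriv s hs.1 hs1)).const_mul 2)).congr_deriv ?_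
    have h := F1_eq s hs.1.le hs1
    have hs0 := hs.1.ne'
    have e : 2 * ((L s).im / s) = (1 - s ^ 2) / (1 + s ^ 2) * FF 1 (xx s) / s := by
      rw [h, mul_div_assoc]
    rw [Complex.div_ofReal_im, e]
    field_simp
    ring

lemma F3_eq : FF 3 1 = 2 * (NN 1).im - 4 * ((L 1).re * (MM 1).im) + 2 * (JJ 1).im := by
  have h := const_of (fun t => FF 3 (xx t) - (2 * (NN t).im - 4 * ((L t).re * (MM t).im)
    + 2 * (JJ t).im)) 1 zero_le_one (ContinuousOn.sub
      (FF3_cont.comp xx_cont.continuousOn fun t _ => abs_le.1 (xx_le t))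
      ((((im_cont N_cont).const_mul 2).sub
      (((Complex.continuous_re.comp L_cont).continuousOn.mul (im_cont M_cont)).const_mul 4)).add
      ((im_cont J_cont.continuousOn).const_mul 2))) ?_
  · have : MM 0 = 0 := by simp [MM, Li_zero]
    have h2 : NN 0 = 0 := by simp [NN, Li_zero]
    have h3 : (JJ 0).im = 0 := by
      simp [JJ, L_zero, v_zero, Li_one_im]
    simp only [xx_zero, FF_zero, xx_one, this, h2, h3] at h
    simp at h
    linarith
  · intro s hs
    refine ((F_step 2 s hs.1 hs.2).sub
      ((((im_deriv (N_deriv s hs.1 hs.2)).const_mul 2).sub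
      (((L_re_deriv s).mul (im_deriv (M_deriv s hs.1 hs.2))).const_mul 4)).add
      ((im_deriv (J_deriv s hs.1)).const_mul 2))).congr_deriv ?_
    rw [F2_eq s hs.1.le hs.2, Complex.div_ofReal_im, Complex.div_ofReal_im, Complex.div_ofReal_im]
    have sq : (L s ^ 2).im = 2 * (L s).re * (L s).im := by
      rw [pow_two, Complex.mul_im]; ring
    rw [sq]
    have hs0 := hs.1.ne'
    field_simp
    ring

lemma L_at_one : L 1 = ((Real.log 2 / 2 : ℝ) : ℂ) + ((π / 4 : ℝ) : ℂ) * Complex.I := by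
  have h2 : Real.exp (Real.log 2 / 2) = √2 := by
    rw [← Real.log_sqrt zero_le_two, Real.exp_log (by positivity)]
  generalize Real.log 2 / 2 = A at *
  have e : (1 + ((1 : ℝ) : ℂ) * Complex.I) =
      Complex.exp ((A : ℂ) + ((π / 4 : ℝ) : ℂ) * Complex.I) := by
    have h3 : √2 * √2 = 2 := Real.mul_self_sqrt zero_le_two
    rw [Complex.exp_add, Complex.exp_mul_I, ← Complex.ofReal_exp, ← Complex.ofReal_cos,
      ← Complex.ofReal_sin, h2, Real.cos_pi_div_four, Real.sin_pi_div_four]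
    have h4 : (√2 : ℂ) * (√2 : ℂ) = 2 := by exact_mod_cast h3
    push_cast
    linear_combination (-(1 + Complex.I) / 2) * h4
  have him : ((A : ℂ) + ((π / 4 : ℝ) : ℂ) * Complex.I).im = π / 4 := by
    rw [Complex.add_im, Complex.im_ofReal_mul]; simp
  unfold L
  rw [e, Complex.log_exp] <;> rw [him] <;> linarith [Real.pi_pos]

lemma w_at_one : ww 1 = (1 + Complex.I) / 2 := by
  rw [w_eq]
  have := u_ne 1
  rw [div_eq_iff this]
  push_cast
  ring_nf
  rw [Complex.I_sq]
  ring

lemma v_at_one : vv 1 = starRingEnd ℂ (ww 1) := by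
  have : vv 1 = 1 - ww 1 := by simp [ww]
  rw [this, w_at_one, map_div₀, map_add, map_one, Complex.conj_I, Complex.conj_ofNat]
  ring

theorem stmt9 :
    (∑' n : ℕ, (4 : ℝ) ^ n / ((Nat.choose (2 * n) n : ℝ) * (2 * (n : ℝ) + 1) ^ 3)) =
    -(π ^ 3 / 32) - π * Real.log 2 ^ 2 / 8 +
      4 * (∑' n : ℕ, ((1 + Complex.I) / 2) ^ (n + 1) / ((n : ℂ) + 1) ^ 3).im := by
  have e1 : (∑' n : ℕ, (4 : ℝ) ^ n / ((Nat.choose (2 * n) n : ℝ) * (2 * (n : ℝ) + 1) ^ 3))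
      = FF 3 1 := by
    unfold FF aa
    refine tsum_congr fun n => ?_
    rw [one_pow, mul_one, div_div]
  have e2 : (∑' n : ℕ, ((1 + Complex.I) / 2) ^ (n + 1) / ((n : ℂ) + 1) ^ 3) = Li 3 (ww 1) := by
    rw [w_at_one]; rfl
  rw [e1, e2, F3_eq, landen 1 (by simp)]
  have hN : (NN 1).im = π ^ 3 / 32 := by
    have := Li_three_I
    simp [NN, this]
  have hr := congrArg Complex.re reflect
  rw [hN]
  unfold JJ
  rw [v_at_one, Li_conj] at hr
  rw [v_at_one, Li_conj, Li_conj]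
  rw [L_at_one] at *
  generalize Li 2 (ww 1) = P at *
  generalize Li 3 (ww 1) = Q at *
  have hp : (π : ℂ) / 2 = ((π / 2 : ℝ) : ℂ) := by push_cast; rfl
  have hp2 : (π : ℂ) ^ 2 / 6 = ((π ^ 2 / 6 : ℝ) : ℂ) := by push_cast; rfl
  have hp3 : (2 / 3 : ℂ) = ((2 / 3 : ℝ) : ℂ) := by push_cast; rfl
  rw [hp, hp2] at hr
  rw [hp, hp3]
  generalize hA : Real.log 2 / 2 = A at *
  have hl : Real.log 2 = 2 * A := by linarith
  rw [hl]
  simp only [pow_succ, pow_zero, one_mul, Complex.add_re, Complex.add_im, Complex.mul_re,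
    Complex.mul_im, Complex.sub_re, Complex.sub_im, Complex.ofReal_re, Complex.ofReal_im,
    Complex.I_re, Complex.I_im, Complex.conj_re, Complex.conj_im, Real.log_one,
    Complex.ofReal_zero, Complex.div_ofNat_im, Complex.zero_re,
    Complex.zero_im, Complex.re_ofNat, Complex.im_ofNat] at hr ⊢
  ring_nf at hr ⊢
  linear_combination (-(π / 2)) * hr
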